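/- arXiv:2401.04019 — 3 statements merged into one kernel-verified Lean document; each statement's English description precedes it below -/
import Mathlib

section
/- For every integer n ≥ 1, |D_5(n)| = |C_{1,2}(n)| + |C_{3,4}(n − 1)|. -/
/-- `D5 n` is the number of partitions of `n` into distinct parts, none divisible by 5.
A partition is a multiset of positive parts. -/
noncomputable def D5 (n : ℕ) : ℕ :=
  Nat.card {s : Multiset ℕ // s.sum = n ∧ s.Nodup ∧ ∀ a ∈ s, 0 < a ∧ ¬ 5 ∣ a}

/-- `Cab a b n` is the number of pairs `(λ, μ)` of partitions with `|λ| + |μ| = n`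
such that `λ` has distinct parts, none congruent to `±a` or `±b` mod `10`, and `μ`
has distinct parts, all divisible by `5`. -/
noncomputable def Cab (a b : ℕ) (n : ℕ) : ℕ :=
  Nat.card {lm : Multiset ℕ × Multiset ℕ //
    lm.1.sum + lm.2.sum = n ∧
    lm.1.Nodup ∧
    (∀ x ∈ lm.1, 0 < x ∧ x % 10 ≠ a % 10 ∧ x % 10 ≠ (10 - a) % 10 ∧
      x % 10 ≠ b % 10 ∧ x % 10 ≠ (10 - b) % 10) ∧
    lm.2.Nodup ∧ (∀ x ∈ lm.2, 0 < x ∧ 5 ∣ x)}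

/-!
Multiplied by `(q⁵; q⁵)_∞ ^ 2`, the generating function of `D5` becomes `f(q, q⁴) f(q², q³)` by the
Jacobi triple product, where `f(x, y) = ∑ x ^ (m (m + 1) / 2) y ^ (m (m - 1) / 2)` is Ramanujan's
theta function. Splitting this double sum over `(m, n)` by the parity of `m + n` gives
`f(q³, q⁷) f(q⁴, q⁶) + q f(q, q⁹) f(q², q⁸)`. The triple product turns each summand back into an
infinite product, and since `(q¹⁰; q¹⁰)_∞ = (q⁵; q⁵)_∞ (-q⁵; q⁵)_∞` the factor
`(q⁵; q⁵)_∞ ^ 2` cancels, which leaves the generating functions of `Cab 1 2` and `Cab 3 4`.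

The triple product is the limit of its finite form, the `q`-binomial theorem, because
`(q; q)_∞ * gaussBinom q (k + l) k` is congruent to `1` modulo `q ^ min k l`.
-/

open Filter PowerSeries
open scoped PowerSeries.WithPiTopology

/-- The triangular number `m (m + 1) / 2`, for any integer `m`. -/
def tri (m : ℤ) : ℕ := (m * (m + 1) / 2).toNat

theorem two_mul_tri (m : ℤ) : 2 * (tri m : ℤ) = m * (m + 1) := by
  have h_nonneg : 0 ≤ m * (m + 1) := by
    rcases le_or_gt 0 m with h | h <;> nlinarith
  rw [tri, Int.toNat_of_nonneg (by positivity),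
    Int.mul_ediv_cancel' (Int.even_mul_succ_self m).two_dvd]

theorem tri_neg (m : ℤ) : tri (-m) = tri (m - 1) := by
  have h₁ := two_mul_tri (-m)
  have h₂ := two_mul_tri (m - 1)
  zify
  linarith

theorem natAbs_le_tri_add_one (m : ℤ) : m.natAbs ≤ tri m + 1 := by
  have h := two_mul_tri m
  zify
  rcases abs_cases m with ⟨hm, _⟩ | ⟨hm, _⟩ <;> rw [hm] <;> nlinarith

section ThetaTerm

variable {A : Type*} [CommSemiring A]

/-- The `m`-th term of Ramanujan's theta function
`f(x, y) = ∑ x ^ (m (m + 1) / 2) * y ^ (m (m - 1) / 2)`. -/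
def thetaTerm (x y : A) (m : ℤ) : A := x ^ tri m * y ^ tri (m - 1)

theorem thetaTerm_neg (x y : A) (m : ℤ) : thetaTerm x y (-m) = thetaTerm y x m := by
  rw [thetaTerm, thetaTerm, tri_neg, ← neg_add', tri_neg, add_sub_cancel_right, mul_comm]

theorem pow_mul_thetaTerm_sub_add_one (x y : A) (i j : ℕ) :
    (x * y) ^ j * thetaTerm x y (i - j + 1) = (x * y) ^ i * x * thetaTerm x y (i - j) := by
  have h₀ := two_mul_tri (i - j - 1)
  have h₁ := two_mul_tri (i - j)
  have h₂ := two_mul_tri (i - j + 1)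
  have hx : j + tri (i - j + 1) = i + 1 + tri (i - j) := by zify; linarith
  have hy : j + tri (i - j) = i + tri (i - j - 1) := by zify; linarith
  calc (x * y) ^ j * thetaTerm x y (i - j + 1)
      = x ^ (j + tri (i - j + 1)) * y ^ (j + tri (i - j)) := by
        rw [thetaTerm, add_sub_cancel_right]; ring
    _ = (x * y) ^ i * x * thetaTerm x y (i - j) := by
        rw [hx, hy, thetaTerm]; ring

theorem pow_dvd_thetaTerm {d x y : A} (hd : d ∣ x * y) (m : ℤ) :
    d ^ (m.natAbs - 1) ∣ thetaTerm x y m := by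
  have hx := natAbs_le_tri_add_one m
  have hy := natAbs_le_tri_add_one (-m)
  rw [Int.natAbs_neg, tri_neg] at hy
  calc d ^ (m.natAbs - 1) ∣ (x * y) ^ (m.natAbs - 1) := pow_dvd_pow_of_dvd hd _
    _ = x ^ (m.natAbs - 1) * y ^ (m.natAbs - 1) := mul_pow ..
    _ ∣ thetaTerm x y m := mul_dvd_mul (pow_dvd_pow x (by omega)) (pow_dvd_pow y (by omega))

end ThetaTerm

section GaussBinom

variable {A : Type*} [CommSemiring A]

/-- The Gaussian binomial coefficient `[n choose k]` at `q`, defined by the `q`-Pascal rule. -/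
def gaussBinom (q : A) : ℕ → ℕ → A
  | _, 0 => 1
  | 0, _ + 1 => 0
  | n + 1, k + 1 => gaussBinom q n k + q ^ (k + 1) * gaussBinom q n (k + 1)

theorem gaussBinom_zero_right (q : A) (n : ℕ) : gaussBinom q n 0 = 1 := by
  cases n <;> rfl

theorem gaussBinom_succ_succ (q : A) (n k : ℕ) :
    gaussBinom q (n + 1) (k + 1) = gaussBinom q n k + q ^ (k + 1) * gaussBinom q n (k + 1) := rfl

theorem gaussBinom_eq_zero_of_lt (q : A) {n k : ℕ} (h : n < k) : gaussBinom q n k = 0 := by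
  induction n generalizing k with
  | zero => obtain ⟨k, rfl⟩ := Nat.exists_eq_add_one_of_ne_zero h.ne'; rfl
  | succ n ih =>
    obtain ⟨k, rfl⟩ := Nat.exists_eq_add_one_of_ne_zero (Nat.ne_zero_of_lt h)
    rw [gaussBinom_succ_succ, ih (by omega), ih (by omega), mul_zero, add_zero]

theorem gaussBinom_succ_succ' (q : A) (n k : ℕ) :
    gaussBinom q (n + 1) (k + 1) = q ^ (n - k) * gaussBinom q n k + gaussBinom q n (k + 1) := by
  induction n generalizing k with
  | zero => cases k <;> simp [gaussBinom]
  | succ n ih =>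
    have hstep := gaussBinom_succ_succ q (n + 1) k
    rcases k with _ | k
    · rw [ih 0] at hstep
      rw [hstep, gaussBinom_succ_succ q n 0]
      simp only [gaussBinom_zero_right, Nat.sub_zero]
      ring
    · have hshift : q ^ (k + 2) * (q ^ (n - (k + 1)) * gaussBinom q n (k + 1)) =
          q ^ (n - k) * (q ^ (k + 1) * gaussBinom q n (k + 1)) := by
        rcases lt_or_ge n (k + 1) with hk | hk
        · simp only [gaussBinom_eq_zero_of_lt q hk, mul_zero]
        · rw [← mul_assoc, ← mul_assoc, ← pow_add, ← pow_add]
          congr 2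
          omega
      rw [ih k, ih (k + 1), mul_add, hshift] at hstep
      rw [hstep, gaussBinom_succ_succ q n k, gaussBinom_succ_succ q n (k + 1),
        Nat.add_sub_add_right]
      ring

theorem sum_gaussBinom_succ (q : A) (n : ℕ) (f : ℕ → A) :
    ∑ k ∈ Finset.range (n + 2), gaussBinom q (n + 1) k * f k =
      ∑ k ∈ Finset.range (n + 1), gaussBinom q n k * (f (k + 1) + q ^ k * f k) := by
  have hlow : ∑ k ∈ Finset.range (n + 1), gaussBinom q n k * (q ^ k * f k) =
      ∑ k ∈ Finset.range (n + 1), q ^ (k + 1) * gaussBinom q n (k + 1) * f (k + 1) + f 0 := by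
    rw [Finset.sum_range_succ', Finset.sum_range_succ, gaussBinom_eq_zero_of_lt q n.lt_succ_self]
    simp [gaussBinom_zero_right, mul_left_comm, mul_assoc]
  simp only [mul_add, Finset.sum_add_distrib]
  rw [hlow, Finset.sum_range_succ', gaussBinom_zero_right, one_mul]
  simp only [gaussBinom_succ_succ, add_mul, Finset.sum_add_distrib, add_assoc]

theorem sum_gaussBinom_succ' (q : A) (n : ℕ) (f : ℕ → A) :
    ∑ k ∈ Finset.range (n + 2), gaussBinom q (n + 1) k * f k =
      ∑ k ∈ Finset.range (n + 1), gaussBinom q n k * (q ^ (n - k) * f (k + 1) + f k) := by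
  have hlow : ∑ k ∈ Finset.range (n + 1), gaussBinom q n k * f k =
      ∑ k ∈ Finset.range (n + 1), gaussBinom q n (k + 1) * f (k + 1) + f 0 := by
    rw [Finset.sum_range_succ', Finset.sum_range_succ, gaussBinom_eq_zero_of_lt q n.lt_succ_self]
    simp [gaussBinom_zero_right]
  simp only [mul_add, Finset.sum_add_distrib]
  rw [hlow, Finset.sum_range_succ', gaussBinom_zero_right, one_mul]
  simp only [gaussBinom_succ_succ', add_mul, Finset.sum_add_distrib, add_assoc, mul_left_comm,
    mul_assoc]

theorem prod_mul_prod_eq_sum_gaussBinom_mul_thetaTerm (x y : A) (m n : ℕ) :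
    (∏ i ∈ Finset.range m, (1 + x * (x * y) ^ i)) * ∏ i ∈ Finset.range n, (1 + y * (x * y) ^ i) =
      ∑ k ∈ Finset.range (m + n + 1), gaussBinom (x * y) (m + n) k * thetaTerm x y (k - n) := by
  induction n with
  | zero =>
    induction m with
    | zero => simp [gaussBinom, thetaTerm, tri]
    | succ m ih =>
      simp only [Nat.cast_zero, sub_zero, add_zero, Finset.range_zero, Finset.prod_empty,
        mul_one] at ih ⊢
      rw [Finset.prod_range_succ, ih, sum_gaussBinom_succ', Finset.sum_mul]
      refine Finset.sum_congr rfl fun k hk ↦ ?_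
      have h := pow_mul_thetaTerm_sub_add_one x y m (m - k)
      rw [Nat.cast_sub (Finset.mem_range_succ_iff.1 hk), sub_sub_cancel] at h
      push_cast
      rw [h]
      ring
  | succ n ih =>
    rw [Finset.prod_range_succ, ← mul_assoc, ih, ← add_assoc, sum_gaussBinom_succ, Finset.sum_mul]
    refine Finset.sum_congr rfl fun k _ ↦ ?_
    have h := pow_mul_thetaTerm_sub_add_one y x n k
    rw [← thetaTerm_neg x, ← thetaTerm_neg x, neg_add', neg_sub, mul_comm y x] at h
    rw [Nat.cast_succ, Nat.cast_succ, add_sub_add_right_eq_sub, ← sub_sub, h]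
    ring

end GaussBinom

theorem gaussBinom_mul_prod {A : Type*} [CommRing A] (q : A) (k l : ℕ) :
    gaussBinom q (k + l) k *
      ((∏ i ∈ Finset.range k, (1 - q * q ^ i)) * ∏ i ∈ Finset.range l, (1 - q * q ^ i)) =
      ∏ i ∈ Finset.range (k + l), (1 - q * q ^ i) := by
  induction k generalizing l with
  | zero => simp [gaussBinom_zero_right]
  | succ k ihk =>
    induction l with
    | zero =>
      have h := ihk 0
      simp only [Finset.range_zero, Finset.prod_empty, mul_one, add_zero] at h ⊢
      rw [gaussBinom_succ_succ, gaussBinom_eq_zero_of_lt q k.lt_succ_self, Finset.prod_range_succ]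
      linear_combination (1 - q * q ^ k) * h
    | succ l ihl =>
      have h := ihk (l + 1)
      rw [show k + 1 + (l + 1) = (k + l + 1) + 1 by ring, gaussBinom_succ_succ,
        Finset.prod_range_succ _ (k + l + 1)]
      rw [← add_assoc] at h
      rw [show k + 1 + l = k + l + 1 by ring] at ihl
      rw [Finset.prod_range_succ _ l] at h ⊢
      rw [Finset.prod_range_succ _ k] at ihl ⊢
      linear_combination (1 - q * q ^ k) * h + q ^ (k + 1) * (1 - q * q ^ l) * ihl

section Convergence

variable {ι κ R : Type*} {w : ι → ℕ}

theorem tendsto_sum_cofinite (hw : Tendsto w cofinite atTop) :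
    Tendsto (fun s : Finset ι ↦ ∑ i ∈ s, w i) cofinite atTop := by
  refine tendsto_atTop.2 fun n ↦ eventually_cofinite.2 ?_
  have hfin : {i | ¬ n ≤ w i}.Finite := eventually_cofinite.1 (hw.eventually_ge_atTop n)
  refine hfin.toFinset.powerset.finite_toSet.subset fun s hs ↦ ?_
  rw [Finset.mem_coe, Finset.mem_powerset]
  exact fun i hi ↦ hfin.mem_toFinset.2 fun h ↦
    hs (h.trans (Finset.single_le_sum_of_canonicallyOrdered hi))

theorem tendsto_add_cofinite {v : κ → ℕ} (hw : Tendsto w cofinite atTop)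
    (hv : Tendsto v cofinite atTop) :
    Tendsto (fun p : ι × κ ↦ w p.1 + v p.2) cofinite atTop := by
  refine tendsto_atTop.2 fun n ↦ eventually_cofinite.2 ?_
  have hw' := eventually_cofinite.1 (hw.eventually_ge_atTop n)
  have hv' := eventually_cofinite.1 (hv.eventually_ge_atTop n)
  refine (hw'.prod hv').subset fun p hp ↦ ?_
  simp only [Set.mem_prod, Set.mem_ofPred_eq] at hp ⊢
  omega

variable [CommRing R] {f : ι → R⟦X⟧}

theorem X_pow_sum_dvd_prod (hf : ∀ i, X ^ w i ∣ f i) (s : Finset ι) :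
    X ^ (∑ i ∈ s, w i) ∣ ∏ i ∈ s, f i := by
  rw [← Finset.prod_pow_eq_pow_sum]
  exact Finset.prod_dvd_prod_of_dvd _ _ fun i _ ↦ hf i

variable [TopologicalSpace R]

theorem summable_of_X_pow_dvd (hw : Tendsto w cofinite atTop) (hf : ∀ i, X ^ w i ∣ f i) :
    Summable f := by
  refine (WithPiTopology.summable_iff_summable_coeff R).2 fun n ↦
    summable_of_hasFiniteSupport ?_
  refine (eventually_cofinite.1 (hw.eventually_gt_atTop n)).subset fun i hi hn ↦ hi ?_
  exact X_pow_dvd_iff.1 (hf i) n hn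

theorem summable_prod_of_X_pow_dvd (hw : Tendsto w cofinite atTop) (hf : ∀ i, X ^ w i ∣ f i) :
    Summable fun s : Finset ι ↦ ∏ i ∈ s, f i :=
  summable_of_X_pow_dvd (tendsto_sum_cofinite hw) (X_pow_sum_dvd_prod hf)

theorem multipliable_one_add_of_X_pow_dvd (hw : Tendsto w cofinite atTop)
    (hf : ∀ i, X ^ w i ∣ f i) : Multipliable fun i ↦ 1 + f i :=
  multipliable_one_add_of_summable_prod (summable_prod_of_X_pow_dvd hw hf)

variable [T2Space R]

theorem coeff_tsum_X_pow (hw : Tendsto w cofinite atTop) (n : ℕ) :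
    coeff n (∑' i, (X : R⟦X⟧) ^ w i) = Nat.card {i // w i = n} := by
  have hsum : Summable fun i ↦ (X : R⟦X⟧) ^ w i := summable_of_X_pow_dvd hw fun _ ↦ dvd_rfl
  have hfin : {i | w i = n}.Finite :=
    (eventually_cofinite.1 (hw.eventually_gt_atTop n)).subset fun i hi ↦ hi.not_gt
  calc coeff n (∑' i, (X : R⟦X⟧) ^ w i)
      = ∑' i, coeff n ((X : R⟦X⟧) ^ w i) :=
        ((WithPiTopology.hasSum_iff_hasSum_coeff R).1 hsum.hasSum n).tsum_eq.symm
    _ = ∑ i ∈ hfin.toFinset, coeff n ((X : R⟦X⟧) ^ w i) :=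
        tsum_eq_sum fun i hi ↦ by
          rw [coeff_X_pow, if_neg fun h ↦ hi (hfin.mem_toFinset.2 h.symm)]
    _ = ∑ i ∈ hfin.toFinset, 1 :=
        Finset.sum_congr rfl fun i hi ↦ by
          rw [← show w i = n from hfin.mem_toFinset.1 hi, coeff_X_pow_self]
    _ = Nat.card {i // w i = n} := by
        rw [Finset.sum_const, nsmul_one,
          Nat.subtype_card (p := (w · = n)) hfin.toFinset fun _ ↦ hfin.mem_toFinset]

theorem X_pow_dvd_tsum {m : ℕ} (hf : ∀ i, X ^ m ∣ f i) : X ^ m ∣ ∑' i, f i := by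
  have hclosed : IsClosed (Ideal.span {(X : R⟦X⟧) ^ m} : Set R⟦X⟧) := by
    have hset : (Ideal.span {(X : R⟦X⟧) ^ m} : Set R⟦X⟧) = ⋂ i < m, {g | coeff i g = 0} := by
      ext g
      simp [Ideal.mem_span_singleton, X_pow_dvd_iff]
    rw [hset]
    exact isClosed_biInter fun i _ ↦
      isClosed_singleton.preimage (WithPiTopology.continuous_coeff R i)
  exact Ideal.mem_span_singleton.1 (tsum_mem hclosed fun i ↦ Ideal.mem_span_singleton.2 (hf i))

variable [IsTopologicalRing R]

theorem X_pow_dvd_tsum_sub_sum {m : ℕ} (hf : Summable f) {s : Finset ι}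
    (h : ∀ i ∉ s, X ^ m ∣ f i) : X ^ m ∣ ∑' i, f i - ∑ i ∈ s, f i := by
  rw [← hf.sum_add_tsum_compl (s := s), add_sub_cancel_left]
  exact X_pow_dvd_tsum fun i ↦ h i i.2

theorem X_pow_dvd_tprod_one_add_sub_prod {m : ℕ} (hf : Summable fun t : Finset ι ↦ ∏ i ∈ t, f i)
    {s : Finset ι} (h : ∀ i ∉ s, X ^ m ∣ f i) :
    X ^ m ∣ ∏' i, (1 + f i) - ∏ i ∈ s, (1 + f i) := by
  rw [tprod_one_add hf, Finset.prod_one_add]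
  refine X_pow_dvd_tsum_sub_sum hf fun t ht ↦ ?_
  obtain ⟨i, hit, his⟩ := Finset.not_subset.1 (Finset.mem_powerset.not.1 ht)
  exact (h i his).trans (Finset.dvd_prod_of_mem f hit)

end Convergence

section QPochhammer

variable {R : Type*} [CommRing R]

theorem X_pow_dvd_neg_mul_pow {q : R⟦X⟧} (hq : X ∣ q) (z : R⟦X⟧) (i : ℕ) :
    X ^ i ∣ -(z * q ^ i) :=
  ((pow_dvd_pow_of_dvd hq i).mul_left z).neg_right

variable [TopologicalSpace R]

/-- The infinite `q`-Pochhammer symbol `(z; q)_∞`. -/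
noncomputable def qPochhammer (z q : R⟦X⟧) : R⟦X⟧ := ∏' i : ℕ, (1 - z * q ^ i)

theorem multipliable_one_sub_mul_pow {q : R⟦X⟧} (hq : X ∣ q) (z : R⟦X⟧) :
    Multipliable fun i : ℕ ↦ 1 - z * q ^ i := by
  simpa only [sub_eq_add_neg] using multipliable_one_add_of_X_pow_dvd
    (Nat.cofinite_eq_atTop ▸ tendsto_id) (X_pow_dvd_neg_mul_pow hq z)

variable [T2Space R] [IsTopologicalRing R]

theorem qPochhammer_sq {q : R⟦X⟧} (hq : X ∣ q) (z : R⟦X⟧) :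
    qPochhammer (z ^ 2) (q ^ 2) = qPochhammer z q * qPochhammer (-z) q := by
  rw [qPochhammer, qPochhammer, qPochhammer, ← (multipliable_one_sub_mul_pow hq z).tprod_mul
    (multipliable_one_sub_mul_pow hq (-z))]
  exact tprod_congr fun i ↦ by ring

theorem X_pow_dvd_qPochhammer_sub_prod {q : R⟦X⟧} (hq : X ∣ q) (z : R⟦X⟧) {m n : ℕ}
    (hmn : m ≤ n) : X ^ m ∣ qPochhammer z q - ∏ i ∈ Finset.range n, (1 - z * q ^ i) := by
  simp only [qPochhammer, sub_eq_add_neg (1 : R⟦X⟧)]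
  refine X_pow_dvd_tprod_one_add_sub_prod (summable_prod_of_X_pow_dvd
    (Nat.cofinite_eq_atTop ▸ tendsto_id) (X_pow_dvd_neg_mul_pow hq z)) fun i hi ↦ ?_
  exact (pow_dvd_pow X (hmn.trans (not_lt.1 (Finset.mem_range.not.1 hi)))).trans
    (X_pow_dvd_neg_mul_pow hq z i)

theorem isUnit_qPochhammer {z q : R⟦X⟧} (hz : X ∣ z) (hq : X ∣ q) :
    IsUnit (qPochhammer z q) := by
  have h := X_pow_dvd_qPochhammer_sub_prod hq z le_rfl (n := 1)
  rw [pow_one, Finset.prod_range_one, pow_zero, mul_one] at h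
  have hone : X ∣ qPochhammer z q - 1 := by simpa only [sub_sub, sub_add_cancel] using dvd_sub h hz
  have hcoeff : constantCoeff (qPochhammer z q) = 1 := by
    simpa [sub_eq_zero] using X_dvd_iff.1 hone
  exact isUnit_iff_constantCoeff.2 (hcoeff ▸ isUnit_one)

theorem X_pow_dvd_qPochhammer_mul_gaussBinom_sub_one {q : R⟦X⟧} (hq : X ∣ q) {m k l : ℕ}
    (hk : m ≤ k) (hl : m ≤ l) : X ^ m ∣ qPochhammer q q * gaussBinom q (k + l) k - 1 := by
  have htrunc {n : ℕ} (hn : m ≤ n) := X_pow_dvd_qPochhammer_sub_prod hq q hn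
  -- Modulo `X ^ m` every truncation is `E := (q; q)_∞`, so the product formula for the Gaussian
  -- binomial coefficient reads `E ^ 2 * gaussBinom q (k + l) k = E`, and `E` is a unit.
  refine (isUnit_qPochhammer hq hq).dvd_mul_left.1 ?_
  have h := dvd_sub ((dvd_mul_sub_mul (htrunc hk) (htrunc hl)).mul_left (gaussBinom q (k + l) k))
    (htrunc (hk.trans (Nat.le_add_right k l)))
  rw [← gaussBinom_mul_prod] at h
  convert h using 1
  ring

end QPochhammer

section JacobiTripleProduct

variable {R : Type*} [CommRing R]

theorem eq_of_forall_X_pow_dvd_sub {f g : R⟦X⟧} (h : ∀ n, X ^ n ∣ f - g) : f = g := by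
  refine PowerSeries.ext fun n ↦ sub_eq_zero.1 ?_
  rw [← map_sub]
  exact X_pow_dvd_iff.1 (h (n + 1)) n n.lt_succ_self

variable [TopologicalSpace R]

/-- Ramanujan's theta function `f(x, y)`. -/
noncomputable def ramanujanTheta (x y : R⟦X⟧) : R⟦X⟧ := ∑' m : ℤ, thetaTerm x y m

theorem tendsto_natAbs_sub_one_cofinite :
    Tendsto (fun m : ℤ ↦ m.natAbs - 1) cofinite atTop := by
  refine tendsto_atTop.2 fun n ↦ eventually_cofinite.2 ?_
  refine (Set.finite_Icc (-(n : ℤ)) n).subset fun m hm ↦ ?_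
  simp only [Set.mem_ofPred_eq] at hm
  rw [Set.mem_Icc]
  omega

theorem summable_thetaTerm {x y : R⟦X⟧} (hxy : X ∣ x * y) : Summable (thetaTerm x y) :=
  summable_of_X_pow_dvd tendsto_natAbs_sub_one_cofinite (pow_dvd_thetaTerm hxy)

variable [T2Space R] [IsTopologicalRing R]

theorem X_pow_dvd_ramanujanTheta_sub_sum {x y : R⟦X⟧} (hxy : X ∣ x * y) (n : ℕ) :
    X ^ n ∣ ramanujanTheta x y -
      ∑ k ∈ Finset.range (n + n + 1), thetaTerm x y (k - n) := by
  have hinj : Function.Injective fun k : ℕ ↦ (k - n : ℤ) := fun k l h ↦ by simpa using h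
  rw [← Finset.sum_image (g := fun k : ℕ ↦ (k - n : ℤ)) (f := thetaTerm x y) hinj.injOn]
  refine X_pow_dvd_tsum_sub_sum (summable_thetaTerm hxy) fun m hm ↦ ?_
  refine (pow_dvd_pow X ?_).trans (pow_dvd_thetaTerm hxy m)
  by_contra! h
  refine hm (Finset.mem_image.2 ⟨(m + n).toNat, Finset.mem_range.2 ?_, ?_⟩) <;> omega

theorem X_pow_dvd_qPochhammer_mul_prod_mul_prod_sub_sum {x y : R⟦X⟧} (hxy : X ∣ x * y) (n : ℕ) :
    X ^ (n - 1) ∣ qPochhammer (x * y) (x * y) * ((∏ i ∈ Finset.range n, (1 + x * (x * y) ^ i)) *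
      ∏ i ∈ Finset.range n, (1 + y * (x * y) ^ i)) -
      ∑ k ∈ Finset.range (n + n + 1), thetaTerm x y (k - n) := by
  rw [prod_mul_prod_eq_sum_gaussBinom_mul_thetaTerm, Finset.mul_sum, ← Finset.sum_sub_distrib]
  refine Finset.dvd_sum fun k hk ↦ ?_
  obtain ⟨l, hl⟩ := Nat.exists_eq_add_of_le (Finset.mem_range_succ_iff.1 hk)
  rw [hl, ← mul_assoc, ← sub_one_mul]
  have h := mul_dvd_mul
    (X_pow_dvd_qPochhammer_mul_gaussBinom_sub_one hxy (min_le_left k l) (min_le_right k l))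
    (pow_dvd_thetaTerm hxy (k - n))
  rw [← pow_add] at h
  exact (pow_dvd_pow X (by omega)).trans h

theorem jacobi_triple_product {x y : R⟦X⟧} (hxy : X ∣ x * y) :
    ramanujanTheta x y = qPochhammer (-x) (x * y) * qPochhammer (-y) (x * y) *
      qPochhammer (x * y) (x * y) := by
  refine eq_of_forall_X_pow_dvd_sub fun n ↦ ?_
  have hprod := dvd_mul_sub_mul
    (X_pow_dvd_qPochhammer_sub_prod hxy (-x) n.le_succ)
    (X_pow_dvd_qPochhammer_sub_prod hxy (-y) n.le_succ)
  simp only [neg_mul, sub_neg_eq_add] at hprod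
  have htheta := (pow_dvd_pow X n.le_succ).trans
    (X_pow_dvd_ramanujanTheta_sub_sum hxy (n + 1))
  have hfinite := X_pow_dvd_qPochhammer_mul_prod_mul_prod_sub_sum hxy (n + 1)
  convert dvd_sub (dvd_sub htheta hfinite)
    (hprod.mul_left (qPochhammer (x * y) (x * y))) using 1
  ring

end JacobiTripleProduct

section RamanujanProduct

/-- The bijection that splits `ℤ × ℤ` by the parity of `m + n`: the even pairs are
`(p + q, p - q)`, and the odd ones `(1 - q - p, p - q)`. -/
noncomputable def paritySplit : (ℤ × ℤ) ⊕ (ℤ × ℤ) ≃ ℤ × ℤ :=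
  Equiv.ofBijective
    (Sum.elim (fun p ↦ (p.1 + p.2, p.1 - p.2)) fun p ↦ (1 - p.2 - p.1, p.1 - p.2)) <| by
    constructor
    · rintro (⟨p, q⟩ | ⟨p, q⟩) (⟨p', q'⟩ | ⟨p', q'⟩) h <;>
        simp only [Sum.elim_inl, Sum.elim_inr, Prod.mk.injEq, Sum.inl.injEq, Sum.inr.injEq,
          reduceCtorEq] at h ⊢ <;> omega
    · rintro ⟨m, n⟩
      rcases Int.even_or_odd' (m + n) with ⟨p, hp | hp⟩
      · exact ⟨.inl (p, m - p), Prod.ext (by grind) (by grind)⟩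
      · exact ⟨.inr (n - p, -p), Prod.ext (by grind) (by grind)⟩

section ThetaTerm

variable {A : Type*} [CommSemiring A] (a u v : A) (p q : ℤ)

theorem thetaTerm_mul_thetaTerm_add_sub :
    thetaTerm a (a * u * v) (p + q) * thetaTerm (a * v) (a * u) (p - q) =
      thetaTerm (a ^ 2 * v) (a ^ 2 * u ^ 2 * v) p *
        thetaTerm (a ^ 2 * u) (a ^ 2 * u * v ^ 2) q := by
  have hu : tri (p + q - 1) + tri (p - q - 1) = 2 * tri (p - 1) + tri q + tri (q - 1) := by
    zify
    linarith [two_mul_tri (p + q - 1), two_mul_tri (p - q - 1), two_mul_tri (p - 1),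
      two_mul_tri q, two_mul_tri (q - 1)]
  have hv : tri (p + q - 1) + tri (p - q) = tri p + tri (p - 1) + 2 * tri (q - 1) := by
    zify
    linarith [two_mul_tri (p + q - 1), two_mul_tri (p - q), two_mul_tri p, two_mul_tri (p - 1),
      two_mul_tri (q - 1)]
  have ha : tri (p + q) + tri (p + q - 1) + tri (p - q) + tri (p - q - 1) =
      2 * (tri p + tri (p - 1) + tri q + tri (q - 1)) := by
    zify
    linarith [two_mul_tri (p + q), two_mul_tri (p + q - 1), two_mul_tri (p - q),
      two_mul_tri (p - q - 1), two_mul_tri p, two_mul_tri (p - 1), two_mul_tri q,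
      two_mul_tri (q - 1)]
  calc thetaTerm a (a * u * v) (p + q) * thetaTerm (a * v) (a * u) (p - q)
      = a ^ (tri (p + q) + tri (p + q - 1) + tri (p - q) + tri (p - q - 1)) *
          u ^ (tri (p + q - 1) + tri (p - q - 1)) * v ^ (tri (p + q - 1) + tri (p - q)) := by
        simp only [thetaTerm]; ring
    _ = _ := by rw [ha, hu, hv]; simp only [thetaTerm]; ring

theorem thetaTerm_mul_thetaTerm_one_sub_sub :
    thetaTerm a (a * u * v) (1 - q - p) * thetaTerm (a * v) (a * u) (p - q) =
      a * (thetaTerm v (a ^ 4 * u ^ 2 * v) p * thetaTerm u (a ^ 4 * u * v ^ 2) q) := by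
  have hu : tri (1 - q - p - 1) + tri (p - q - 1) = 2 * tri (p - 1) + tri q + tri (q - 1) := by
    zify
    linarith [two_mul_tri (1 - q - p - 1), two_mul_tri (p - q - 1), two_mul_tri (p - 1),
      two_mul_tri q, two_mul_tri (q - 1)]
  have hv : tri (1 - q - p - 1) + tri (p - q) = tri p + tri (p - 1) + 2 * tri (q - 1) := by
    zify
    linarith [two_mul_tri (1 - q - p - 1), two_mul_tri (p - q), two_mul_tri p,
      two_mul_tri (p - 1), two_mul_tri (q - 1)]
  have ha : tri (1 - q - p) + tri (1 - q - p - 1) + tri (p - q) + tri (p - q - 1) =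
      1 + 4 * (tri (p - 1) + tri (q - 1)) := by
    zify
    linarith [two_mul_tri (1 - q - p), two_mul_tri (1 - q - p - 1), two_mul_tri (p - q),
      two_mul_tri (p - q - 1), two_mul_tri (p - 1), two_mul_tri (q - 1)]
  calc thetaTerm a (a * u * v) (1 - q - p) * thetaTerm (a * v) (a * u) (p - q)
      = a ^ (tri (1 - q - p) + tri (1 - q - p - 1) + tri (p - q) + tri (p - q - 1)) *
          u ^ (tri (1 - q - p - 1) + tri (p - q - 1)) *
          v ^ (tri (1 - q - p - 1) + tri (p - q)) := by
        simp only [thetaTerm]; ring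
    _ = _ := by rw [ha, hu, hv]; simp only [thetaTerm]; ring

end ThetaTerm

variable {R : Type*} [CommRing R] [TopologicalSpace R] [T2Space R] [IsTopologicalRing R]

theorem hasSum_thetaTerm_mul_thetaTerm {x y z w : R⟦X⟧} (hxy : X ∣ x * y) (hzw : X ∣ z * w) :
    HasSum (fun p : ℤ × ℤ ↦ thetaTerm x y p.1 * thetaTerm z w p.2)
      (ramanujanTheta x y * ramanujanTheta z w) := by
  refine (summable_thetaTerm hxy).hasSum.mul (summable_thetaTerm hzw).hasSum ?_
  refine summable_of_X_pow_dvd (tendsto_add_cofinite tendsto_natAbs_sub_one_cofinite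
    tendsto_natAbs_sub_one_cofinite) fun p ↦ ?_
  rw [pow_add]
  exact mul_dvd_mul (pow_dvd_thetaTerm hxy p.1) (pow_dvd_thetaTerm hzw p.2)

theorem ramanujanTheta_mul_ramanujanTheta {a u v : R⟦X⟧} (h : X ∣ a ^ 2 * u * v) :
    ramanujanTheta a (a * u * v) * ramanujanTheta (a * v) (a * u) =
      ramanujanTheta (a ^ 2 * v) (a ^ 2 * u ^ 2 * v) *
        ramanujanTheta (a ^ 2 * u) (a ^ 2 * u * v ^ 2) +
      a * (ramanujanTheta v (a ^ 4 * u ^ 2 * v) * ramanujanTheta u (a ^ 4 * u * v ^ 2)) := by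
  have hsq : X ∣ (a ^ 2 * u * v) ^ 2 := dvd_pow h two_ne_zero
  have hall := hasSum_thetaTerm_mul_thetaTerm (x := a) (y := a * u * v) (z := a * v) (w := a * u)
    (h.trans (dvd_of_eq (by ring))) (h.trans (dvd_of_eq (by ring)))
  have heven := hasSum_thetaTerm_mul_thetaTerm (x := a ^ 2 * v) (y := a ^ 2 * u ^ 2 * v)
    (z := a ^ 2 * u) (w := a ^ 2 * u * v ^ 2)
    (hsq.trans (dvd_of_eq (by ring))) (hsq.trans (dvd_of_eq (by ring)))
  have hodd := (hasSum_thetaTerm_mul_thetaTerm (x := v) (y := a ^ 4 * u ^ 2 * v) (z := u)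
    (w := a ^ 4 * u * v ^ 2) (hsq.trans (dvd_of_eq (by ring)))
    (hsq.trans (dvd_of_eq (by ring)))).mul_left a
  simp only [← thetaTerm_mul_thetaTerm_add_sub] at heven
  simp only [← thetaTerm_mul_thetaTerm_one_sub_sub] at hodd
  exact (paritySplit.hasSum_iff.2 hall).unique (HasSum.sum heven hodd)

end RamanujanProduct

section DistinctParts

/-- The arithmetic progression `a, a + s, a + 2 s, …`. -/
def arithProg (s a : ℕ) : Set ℕ := {m | a ≤ m ∧ m ≡ a [MOD s]}

theorem range_mul_add_eq_arithProg (s a : ℕ) : (Set.range fun n ↦ s * n + a) = arithProg s a := by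
  ext m
  constructor
  · rintro ⟨n, rfl⟩
    exact ⟨Nat.le_add_left a _, by simp [Nat.ModEq]⟩
  · rintro ⟨hle, hmod⟩
    obtain ⟨n, hn⟩ := (Nat.modEq_iff_dvd' hle).1 hmod.symm
    exact ⟨n, by simp only; omega⟩

/-- The partitions into distinct parts taken from `S`, as multisets. -/
def distinctParts (S : Set ℕ) : Set (Multiset ℕ) := {s | s.Nodup ∧ ∀ a ∈ s, a ∈ S}

/-- A partition into distinct parts from `S` is a finite subset of `S`. -/
def finsetEquivDistinctParts (S : Set ℕ) : Finset S ≃ distinctParts S where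
  toFun t := ⟨t.val.map (↑), t.nodup.map Subtype.val_injective,
    fun _ ha ↦ let ⟨i, _, hi⟩ := Multiset.mem_map.1 ha; hi ▸ i.2⟩
  invFun s := ⟨s.1.attach.map fun a ↦ ⟨a.1, s.2.2 a.1 a.2⟩,
    (Multiset.nodup_attach.2 s.2.1).map fun _ _ h ↦ Subtype.ext (Subtype.mk.inj h)⟩
  left_inv t := by
    apply Finset.map_injective (Function.Embedding.subtype (· ∈ S))
    ext
    simp
  right_inv s := Subtype.ext (by simp)

theorem tendsto_subtypeVal_cofinite (S : Set ℕ) :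
    Tendsto (fun i : S ↦ (i : ℕ)) cofinite atTop :=
  Nat.cofinite_eq_atTop ▸ Subtype.val_injective.tendsto_cofinite

theorem tendsto_sum_distinctParts (S : Set ℕ) :
    Tendsto (fun s : distinctParts S ↦ s.1.sum) cofinite atTop := by
  have h := (tendsto_sum_cofinite (tendsto_subtypeVal_cofinite S)).comp
    (finsetEquivDistinctParts S).symm.injective.tendsto_cofinite
  refine h.congr fun s ↦ ?_
  exact congrArg (Multiset.sum ∘ Subtype.val) ((finsetEquivDistinctParts S).apply_symm_apply s)

variable (R : Type*) [CommRing R] [TopologicalSpace R]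

/-- The generating function of the partitions into distinct parts from `S`. -/
noncomputable def distinctGenFun (S : Set ℕ) : R⟦X⟧ := ∑' s : distinctParts S, X ^ s.1.sum

theorem summable_X_pow_sum (S : Set ℕ) :
    Summable fun s : distinctParts S ↦ (X : R⟦X⟧) ^ s.1.sum :=
  summable_of_X_pow_dvd (tendsto_sum_distinctParts S) fun _ ↦ dvd_rfl

theorem multipliable_one_add_X_pow (S : Set ℕ) :
    Multipliable fun i : S ↦ 1 + (X : R⟦X⟧) ^ (i : ℕ) :=
  multipliable_one_add_of_X_pow_dvd (tendsto_subtypeVal_cofinite S) fun _ ↦ dvd_rfl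

theorem tprod_arithProg (s : ℕ) [NeZero s] (a : ℕ) :
    ∏' i : arithProg s a, (1 + X ^ (i : ℕ)) = qPochhammer (-X ^ a : R⟦X⟧) (X ^ s) := by
  have hinj : Function.Injective fun n ↦ s * n + a := fun m n h ↦ by simpa [NeZero.ne s] using h
  rw [← range_mul_add_eq_arithProg, tprod_range (fun i ↦ 1 + (X : R⟦X⟧) ^ i) hinj, qPochhammer]
  exact tprod_congr fun n ↦ by ring

variable [T2Space R]

theorem coeff_distinctGenFun (S : Set ℕ) (n : ℕ) :
    coeff n (distinctGenFun R S) = Nat.card {s : distinctParts S // s.1.sum = n} :=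
  coeff_tsum_X_pow (tendsto_sum_distinctParts S) n

theorem distinctGenFun_eq_tprod (S : Set ℕ) :
    distinctGenFun R S = ∏' i : S, (1 + X ^ (i : ℕ)) := by
  have hsum : Summable fun t : Finset S ↦ ∏ i ∈ t, (X : R⟦X⟧) ^ (i : ℕ) :=
    summable_prod_of_X_pow_dvd (tendsto_subtypeVal_cofinite S) fun _ ↦ dvd_rfl
  rw [tprod_one_add hsum, distinctGenFun, ← (finsetEquivDistinctParts S).tsum_eq]
  exact tsum_congr fun t ↦ (Finset.prod_pow_eq_pow_sum t _ X).symm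

variable [IsTopologicalRing R]

theorem coeff_distinctGenFun_mul (S T : Set ℕ) (n : ℕ) :
    coeff n (distinctGenFun R S * distinctGenFun R T) =
      Nat.card {p : distinctParts S × distinctParts T // p.1.1.sum + p.2.1.sum = n} := by
  have hw := tendsto_add_cofinite (tendsto_sum_distinctParts S) (tendsto_sum_distinctParts T)
  have hsum := (summable_X_pow_sum R S).hasSum.mul (summable_X_pow_sum R T).hasSum <|
    summable_of_X_pow_dvd hw fun p ↦ (pow_add X _ _).dvd
  rw [distinctGenFun, distinctGenFun, ← coeff_tsum_X_pow (R := R) hw, ← hsum.tsum_eq]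
  simp only [pow_add]

theorem distinctGenFun_biUnion_arithProg {s : ℕ} [NeZero s] {A : Finset ℕ}
    (hA : ∀ a ∈ A, ∀ b ∈ A, a ≡ b [MOD s] → a = b) :
    distinctGenFun R (⋃ a ∈ A, arithProg s a) = ∏ a ∈ A, qPochhammer (-X ^ a) (X ^ s) := by
  have hdisj : (A : Set ℕ).PairwiseDisjoint (arithProg s) := fun a ha b hb hab ↦
    Set.disjoint_left.2 fun m hma hmb ↦ hab (hA a ha b hb (hma.2.symm.trans hmb.2))
  rw [distinctGenFun_eq_tprod, Multipliable.tprod_finset_bUnion_disjoint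
    (f := fun i ↦ 1 + (X : R⟦X⟧) ^ i) hdisj fun a _ ↦ multipliable_one_add_X_pow R _]
  exact Finset.prod_congr rfl fun a _ ↦ tprod_arithProg R s a

end DistinctParts

section ModTen

theorem card_distinctParts_eq_D5 (n : ℕ) :
    Nat.card {s : distinctParts {x | 0 < x ∧ ¬ 5 ∣ x} // s.1.sum = n} = D5 n :=
  Nat.card_congr
    { toFun s := ⟨s.1.1, s.2, s.1.2⟩
      invFun s := ⟨⟨s.1, s.2.2⟩, s.2.1⟩ }

/-- The possible parts of `λ` in a pair `(λ, μ)` counted by `Cab a b`. -/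
def cabParts (a b : ℕ) : Set ℕ :=
  {x | 0 < x ∧ x % 10 ≠ a % 10 ∧ x % 10 ≠ (10 - a) % 10 ∧ x % 10 ≠ b % 10 ∧
    x % 10 ≠ (10 - b) % 10}

theorem card_distinctParts_prod_eq_Cab (a b n : ℕ) :
    Nat.card {p : distinctParts (cabParts a b) × distinctParts {x | 0 < x ∧ 5 ∣ x} //
      p.1.1.sum + p.2.1.sum = n} = Cab a b n :=
  Nat.card_congr
    { toFun p := ⟨(p.1.1.1, p.1.2.1), p.2, p.1.1.2.1, p.1.1.2.2, p.1.2.2⟩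
      invFun q := ⟨(⟨q.1.1, q.2.2.1, q.2.2.2.1⟩, ⟨q.1.2, q.2.2.2.2⟩), q.2.1⟩ }

variable (R : Type*) [CommRing R] [TopologicalSpace R] [T2Space R]

theorem coeff_distinctGenFun_not_five_dvd (n : ℕ) :
    coeff n (distinctGenFun R {x | 0 < x ∧ ¬ 5 ∣ x}) = D5 n := by
  rw [coeff_distinctGenFun, card_distinctParts_eq_D5]

theorem distinctGenFun_five_dvd :
    distinctGenFun R {x | 0 < x ∧ 5 ∣ x} = qPochhammer (-X ^ 5) (X ^ 5) := by
  have hparts : {x | 0 < x ∧ 5 ∣ x} = arithProg 5 5 := by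
    ext x
    simp only [arithProg, Nat.ModEq, Set.mem_ofPred_eq]
    omega
  rw [hparts, distinctGenFun_eq_tprod, tprod_arithProg]

variable [IsTopologicalRing R]

theorem coeff_distinctGenFun_cabParts_mul (a b n : ℕ) :
    coeff n (distinctGenFun R (cabParts a b) * distinctGenFun R {x | 0 < x ∧ 5 ∣ x}) =
      Cab a b n := by
  rw [coeff_distinctGenFun_mul, card_distinctParts_prod_eq_Cab]

theorem ramanujanTheta_X_pow {a b s : ℕ} [NeZero s] (hs : a + b = s) :
    ramanujanTheta (X ^ a : R⟦X⟧) (X ^ b) =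
      qPochhammer (-X ^ a) (X ^ s) * qPochhammer (-X ^ b) (X ^ s) *
        qPochhammer (X ^ s) (X ^ s) := by
  have hmul : (X : R⟦X⟧) ^ a * X ^ b = X ^ s := by rw [← pow_add, hs]
  rw [jacobi_triple_product (hmul ▸ dvd_pow_self X (NeZero.ne s)), hmul]

theorem ramanujanTheta_X_pow_mul_ramanujanTheta_X_pow :
    ramanujanTheta (X ^ 1 : R⟦X⟧) (X ^ 4) * ramanujanTheta (X ^ 2) (X ^ 3) =
      ramanujanTheta (X ^ 3) (X ^ 7) * ramanujanTheta (X ^ 4) (X ^ 6) +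
      X * (ramanujanTheta (X ^ 1) (X ^ 9) * ramanujanTheta (X ^ 2) (X ^ 8)) := by
  convert ramanujanTheta_mul_ramanujanTheta (a := (X : R⟦X⟧)) (u := X ^ 2) (v := X)
    (dvd_mul_left X _) using 5 <;> ring

theorem qPochhammer_X_pow_ten :
    qPochhammer (X ^ 10 : R⟦X⟧) (X ^ 10) =
      qPochhammer (X ^ 5) (X ^ 5) * qPochhammer (-X ^ 5) (X ^ 5) := by
  rw [← qPochhammer_sq (dvd_pow_self X (by norm_num)), ← pow_mul]

theorem distinctGenFun_not_five_dvd :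
    distinctGenFun R {x | 0 < x ∧ ¬ 5 ∣ x} =
      qPochhammer (-X ^ 1) (X ^ 5) * qPochhammer (-X ^ 2) (X ^ 5) *
        qPochhammer (-X ^ 3) (X ^ 5) * qPochhammer (-X ^ 4) (X ^ 5) := by
  have hparts : {x | 0 < x ∧ ¬ 5 ∣ x} = ⋃ a ∈ ({1, 2, 3, 4} : Finset ℕ), arithProg 5 a := by
    ext x
    simp only [arithProg, Nat.ModEq, Finset.mem_insert, Finset.mem_singleton,
      Set.iUnion_iUnion_eq_or_left, Set.iUnion_iUnion_eq_left, Set.mem_union, Set.mem_ofPred_eq]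
    omega
  rw [hparts, distinctGenFun_biUnion_arithProg R (by decide)]
  simp [mul_assoc]

theorem qPochhammer_neg_X_pow_five :
    qPochhammer (-X ^ 5) (X ^ 5) =
      qPochhammer (-X ^ 5 : R⟦X⟧) (X ^ 10) * qPochhammer (-X ^ 10) (X ^ 10) := by
  have hparts : {x | 0 < x ∧ 5 ∣ x} = ⋃ a ∈ ({5, 10} : Finset ℕ), arithProg 10 a := by
    ext x
    simp only [arithProg, Nat.ModEq, Finset.mem_insert, Finset.mem_singleton,
      Set.iUnion_iUnion_eq_or_left, Set.iUnion_iUnion_eq_left, Set.mem_union, Set.mem_ofPred_eq]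
    omega
  rw [← distinctGenFun_five_dvd, hparts,
    distinctGenFun_biUnion_arithProg R (by decide), Finset.prod_pair (by norm_num)]

theorem distinctGenFun_cabParts_one_two :
    distinctGenFun R (cabParts 1 2) =
      qPochhammer (-X ^ 3) (X ^ 10) * qPochhammer (-X ^ 7) (X ^ 10) *
        (qPochhammer (-X ^ 4) (X ^ 10) * qPochhammer (-X ^ 6) (X ^ 10)) *
        qPochhammer (-X ^ 5) (X ^ 5) := by
  have hparts : cabParts 1 2 = ⋃ a ∈ ({3, 7, 4, 6, 5, 10} : Finset ℕ), arithProg 10 a := by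
    ext x
    simp only [cabParts, arithProg, Nat.ModEq, Finset.mem_insert, Finset.mem_singleton,
      Set.iUnion_iUnion_eq_or_left, Set.iUnion_iUnion_eq_left, Set.mem_union, Set.mem_ofPred_eq]
    omega
  rw [hparts, distinctGenFun_biUnion_arithProg R (by decide),
    qPochhammer_neg_X_pow_five]
  simp [mul_assoc]

theorem distinctGenFun_cabParts_three_four :
    distinctGenFun R (cabParts 3 4) =
      qPochhammer (-X ^ 1) (X ^ 10) * qPochhammer (-X ^ 9) (X ^ 10) *
        (qPochhammer (-X ^ 2) (X ^ 10) * qPochhammer (-X ^ 8) (X ^ 10)) *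
        qPochhammer (-X ^ 5) (X ^ 5) := by
  have hparts : cabParts 3 4 = ⋃ a ∈ ({1, 9, 2, 8, 5, 10} : Finset ℕ), arithProg 10 a := by
    ext x
    simp only [cabParts, arithProg, Nat.ModEq, Finset.mem_insert, Finset.mem_singleton,
      Set.iUnion_iUnion_eq_or_left, Set.iUnion_iUnion_eq_left, Set.mem_union, Set.mem_ofPred_eq]
    omega
  rw [hparts, distinctGenFun_biUnion_arithProg R (by decide),
    qPochhammer_neg_X_pow_five]
  simp [mul_assoc]

theorem distinctGenFun_not_five_dvd_eq_add :
    distinctGenFun R {x | 0 < x ∧ ¬ 5 ∣ x} =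
      distinctGenFun R (cabParts 1 2) * distinctGenFun R {x | 0 < x ∧ 5 ∣ x} +
      X * (distinctGenFun R (cabParts 3 4) * distinctGenFun R {x | 0 < x ∧ 5 ∣ x}) := by
  have htheta := ramanujanTheta_X_pow_mul_ramanujanTheta_X_pow R
  rw [ramanujanTheta_X_pow R (show 1 + 4 = 5 from rfl),
    ramanujanTheta_X_pow R (show 2 + 3 = 5 from rfl),
    ramanujanTheta_X_pow R (show 3 + 7 = 10 from rfl),
    ramanujanTheta_X_pow R (show 4 + 6 = 10 from rfl),
    ramanujanTheta_X_pow R (show 1 + 9 = 10 from rfl),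
    ramanujanTheta_X_pow R (show 2 + 8 = 10 from rfl), qPochhammer_X_pow_ten] at htheta
  have hunit : IsUnit (qPochhammer (X ^ 5 : R⟦X⟧) (X ^ 5)) :=
    isUnit_qPochhammer (dvd_pow_self X (by norm_num)) (dvd_pow_self X (by norm_num))
  rw [distinctGenFun_five_dvd, distinctGenFun_not_five_dvd, distinctGenFun_cabParts_one_two,
    distinctGenFun_cabParts_three_four]
  refine (hunit.pow 2).mul_left_cancel ?_
  linear_combination htheta

end ModTen

/-- For every `n ≥ 1`, `|D_5(n)| = |C_{1,2}(n)| + |C_{3,4}(n − 1)|`. -/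
theorem stmt10 (n : ℕ) (hn : 1 ≤ n) : D5 n = Cab 1 2 n + Cab 3 4 (n - 1) := by
  obtain ⟨k, rfl⟩ := Nat.exists_eq_add_of_le' hn
  have h := congrArg (coeff (k + 1)) (distinctGenFun_not_five_dvd_eq_add ℤ)
  rw [map_add, coeff_succ_X_mul, coeff_distinctGenFun_not_five_dvd,
    coeff_distinctGenFun_cabParts_mul, coeff_distinctGenFun_cabParts_mul] at h
  exact_mod_cast h
end

section
/- For every integer n ≥ 0, b_3(n) − b_3(n−1) − b_3(n−2) + b_3(n−5) − ρ_3(n) ≤ 0. -/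
/-- `b3 m` is the number of 3-regular partitions of `m` (no part divisible by 3),
with `b3 m = 0` for `m < 0`. A partition is a multiset of positive parts. -/
noncomputable def b3 (m : ℤ) : ℕ :=
  Nat.card {s : Multiset ℕ // (s.sum : ℤ) = m ∧ ∀ a ∈ s, 0 < a ∧ ¬ 3 ∣ a}

/-!
Let `P` be a set of positive integers containing `1` and `2`, and let `p(m)` count the partitions
of `m` with parts in `P`. Splitting off parts `1` and `2` turns `p(n) - p(n-1) - p(n-2) + p(n-5)`
into `d(n) - e(n-3)`, where `d(n)` counts the partitions of `n` with parts in `Q = P \ {1, 2}` and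
`e(m)` those of all integers up to `m`; in generating functions this is
`1 - q - q² + q⁵ = (1 - q)(1 - q²) - q³(1 - q²)`.
For `n > 0`, removing one part (which is at least `3`) shows `d(n) ≤ e(n-3)`. If `n ∉ P`, the empty
partition is never obtained this way, which makes the inequality strict. For 3-regular partitions
this gains the missing `1` at all positive multiples of `3`, the only places where `ρ` can be `-1`.
-/

/-- The partitions of `m` with all parts in `P`. The size is an integer, so that there are no
partitions of a negative size and recurrences hold without side conditions. -/
def partitionsInto (P : Set ℕ) (m : ℤ) : Set (Multiset ℕ) :=
  {s | (s.sum : ℤ) = m ∧ ∀ a ∈ s, a ∈ P}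

/-- The partitions of all integers up to `m` with all parts in `P`: the summatory version of
`partitionsInto`. -/
def partitionsUpTo (P : Set ℕ) (m : ℤ) : Set (Multiset ℕ) :=
  {s | (s.sum : ℤ) ≤ m ∧ ∀ a ∈ s, a ∈ P}

section Partitions

variable {P : Set ℕ} {a : ℕ} {m : ℤ}

lemma cons_mem_partitionsInto {t : Multiset ℕ} :
    a ::ₘ t ∈ partitionsInto P m ↔ a ∈ P ∧ t ∈ partitionsInto P (m - a) := by
  simp only [partitionsInto, Set.mem_ofPred_eq, Multiset.sum_cons, Multiset.forall_mem_cons,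
    Nat.cast_add, eq_sub_iff_add_eq']
  tauto

lemma partitionsInto_subset_partitionsUpTo : partitionsInto P m ⊆ partitionsUpTo P m :=
  fun _ hs ↦ ⟨hs.1.le, hs.2⟩

lemma partitionsUpTo_of_neg (hm : m < 0) : partitionsUpTo P m = ∅ :=
  Set.eq_empty_of_forall_notMem fun s hs ↦ by
    have := hs.1
    omega

lemma partitionsInto_of_neg (hm : m < 0) : partitionsInto P m = ∅ :=
  Set.subset_eq_empty partitionsInto_subset_partitionsUpTo (partitionsUpTo_of_neg hm)

lemma partitionsInto_zero (hP : 0 ∉ P) : partitionsInto P 0 = {0} := by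
  ext s
  simp only [partitionsInto, Set.mem_ofPred_eq, Set.mem_singleton_iff, Nat.cast_eq_zero,
    Multiset.sum_eq_zero_iff]
  refine ⟨fun ⟨hzero, hs⟩ ↦ ?_, by rintro rfl; simp⟩
  exact Multiset.eq_zero_of_forall_notMem fun b hb ↦ hP (hzero b hb ▸ hs b hb)

lemma finite_partitionsUpTo (hP : 0 ∉ P) : (partitionsUpTo P m).Finite := by
  refine (Set.finite_range fun p : Σ k : Fin (m.toNat + 1), Nat.Partition k ↦ p.2.parts).subset ?_
  rintro s ⟨hsum, hs⟩
  have hpos : ∀ {b}, b ∈ s → 0 < b := fun hb ↦ Nat.pos_of_ne_zero fun h ↦ hP (h ▸ hs _ hb)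
  exact ⟨⟨⟨s.sum, by omega⟩, s, hpos, rfl⟩, rfl⟩

lemma finite_partitionsInto (hP : 0 ∉ P) : (partitionsInto P m).Finite :=
  (finite_partitionsUpTo hP).subset partitionsInto_subset_partitionsUpTo

lemma partitionsInto_eq_image_cons_union (ha : a ∈ P) :
    partitionsInto P m =
      (a ::ₘ ·) '' partitionsInto P (m - a) ∪ partitionsInto (P \ {a}) m := by
  ext s
  constructor
  · intro hs
    by_cases has : a ∈ s
    · obtain ⟨t, rfl⟩ := Multiset.exists_cons_of_mem has
      exact .inl ⟨t, (cons_mem_partitionsInto.1 hs).2, rfl⟩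
    · exact .inr ⟨hs.1, fun b hb ↦ ⟨hs.2 b hb, fun hba ↦ has (hba ▸ hb)⟩⟩
  · rintro (⟨t, ht, rfl⟩ | hs)
    · exact cons_mem_partitionsInto.2 ⟨ha, ht⟩
    · exact ⟨hs.1, fun b hb ↦ (hs.2 b hb).1⟩

lemma ncard_partitionsInto_of_mem (hP : 0 ∉ P) (ha : a ∈ P) (m : ℤ) :
    (partitionsInto P m).ncard =
      (partitionsInto P (m - a)).ncard + (partitionsInto (P \ {a}) m).ncard := by
  have hdisj : Disjoint ((a ::ₘ ·) '' partitionsInto P (m - a)) (partitionsInto (P \ {a}) m) := by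
    rw [Set.disjoint_left]
    rintro _ ⟨t, -, rfl⟩ ⟨-, ht⟩
    exact (ht a (Multiset.mem_cons_self a t)).2 rfl
  rw [partitionsInto_eq_image_cons_union ha,
    Set.ncard_union_eq hdisj ((finite_partitionsInto hP).image _)
      (finite_partitionsInto fun h ↦ hP h.1),
    Set.ncard_image_of_injective _ fun _ _ ↦ (Multiset.cons_inj_right a).1]

lemma partitionsUpTo_eq_union (P : Set ℕ) (m : ℤ) :
    partitionsUpTo P m = partitionsUpTo P (m - 1) ∪ partitionsInto P m := by
  ext s
  simp only [partitionsUpTo, partitionsInto, Set.mem_ofPred_eq, Set.mem_union, ← or_and_right]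
  refine and_congr_left fun _ ↦ ?_
  omega

lemma ncard_partitionsUpTo (hP : 0 ∉ P) (m : ℤ) :
    (partitionsUpTo P m).ncard =
      (partitionsUpTo P (m - 1)).ncard + (partitionsInto P m).ncard := by
  have hdisj : Disjoint (partitionsUpTo P (m - 1)) (partitionsInto P m) := by
    rw [Set.disjoint_left]
    rintro s ⟨hle, -⟩ ⟨heq, -⟩
    omega
  rw [partitionsUpTo_eq_union,
    Set.ncard_union_eq hdisj (finite_partitionsUpTo hP) (finite_partitionsInto hP)]

-- In generating functions: `1 / (1 - q) = (1 + q + ⋯ + q ^ (a - 1)) / (1 - q ^ a)`.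
lemma ncard_partitionsUpTo_sdiff_singleton (hP : 0 ∉ P) (ha : a ∈ P) (m : ℤ) :
    (partitionsUpTo (P \ {a}) m).ncard =
      ∑ j ∈ Finset.range a, (partitionsInto P (m - j)).ncard := by
  have of_neg : ∀ m : ℤ, m < 0 → (partitionsUpTo (P \ {a}) m).ncard =
      ∑ j ∈ Finset.range a, (partitionsInto P (m - j)).ncard := by
    intro m hm
    rw [partitionsUpTo_of_neg hm, Set.ncard_empty, Finset.sum_eq_zero]
    intro j _
    rw [partitionsInto_of_neg (by omega), Set.ncard_empty]
  rcases lt_or_ge m (-1) with hm | hm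
  · exact of_neg m (by omega)
  induction m, hm using Int.leInduction with
  | base => exact of_neg (-1) (by norm_num)
  | succ m _ ih =>
    have hshift := Finset.sum_range_succ' (fun j : ℕ ↦ (partitionsInto P (m + 1 - j)).ncard) a
    rw [Finset.sum_range_succ] at hshift
    simp only [Nat.cast_add, Nat.cast_one, Nat.cast_zero, sub_zero, add_sub_add_right_eq_sub]
      at hshift
    have hrec := ncard_partitionsInto_of_mem hP ha (m + 1)
    rw [ncard_partitionsUpTo (fun h ↦ hP h.1), add_sub_cancel_right, ih]
    omega

lemma exists_cons_of_mem_partitionsInto {s : Multiset ℕ} (hm : m ≠ 0)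
    (hs : s ∈ partitionsInto P m) :
    ∃ b ∈ P, ∃ t ∈ partitionsInto P (m - b), s = b ::ₘ t := by
  have hs0 : s ≠ 0 := by
    rintro rfl
    exact hm (by simpa using hs.1.symm)
  obtain ⟨b, hb⟩ := Multiset.exists_mem_of_ne_zero hs0
  obtain ⟨t, rfl⟩ := Multiset.exists_cons_of_mem hb
  obtain ⟨hbP, ht⟩ := cons_mem_partitionsInto.1 hs
  exact ⟨b, hbP, t, ht, rfl⟩

-- A removed part can be recovered from what remains, since the total is known.
lemma partitionsInto_subset_image_partitionsUpTo {k : ℕ} (hk : ∀ b ∈ P, k ≤ b) (hm : m ≠ 0) :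
    partitionsInto P m ⊆ (fun t ↦ (m - t.sum).toNat ::ₘ t) '' partitionsUpTo P (m - k) := by
  intro s hs
  obtain ⟨b, hb, t, ⟨hsum, ht⟩, rfl⟩ := exists_cons_of_mem_partitionsInto hm hs
  have hkb := hk b hb
  refine ⟨t, ⟨by omega, ht⟩, ?_⟩
  simp only [hsum, sub_sub_cancel, Int.toNat_natCast]

lemma ncard_partitionsInto_le_ncard_partitionsUpTo {k : ℕ} (hP : 0 ∉ P) (hk : ∀ b ∈ P, k ≤ b)
    (hm : m ≠ 0) : (partitionsInto P m).ncard ≤ (partitionsUpTo P (m - k)).ncard :=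
  (Set.ncard_le_ncard (partitionsInto_subset_image_partitionsUpTo hk hm)
    ((finite_partitionsUpTo hP).image _)).trans (Set.ncard_image_le (finite_partitionsUpTo hP))

lemma ncard_partitionsInto_lt_ncard_partitionsUpTo {k n : ℕ} (hP : 0 ∉ P) (hk : ∀ b ∈ P, k ≤ b)
    (hn : n ≠ 0) (hkn : k ≤ n) (hnP : n ∉ P) :
    (partitionsInto P n).ncard < (partitionsUpTo P (n - k)).ncard := by
  have hfin : (partitionsUpTo P (n - k : ℤ)).Finite := finite_partitionsUpTo hP
  have hempty : (0 : Multiset ℕ) ∈ partitionsUpTo P (n - k) :=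
    ⟨by simpa using hkn, by simp⟩
  have hsub : partitionsInto P n ⊆
      (fun t ↦ (n - t.sum : ℤ).toNat ::ₘ t) '' (partitionsUpTo P (n - k) \ {0}) := by
    intro s hs
    obtain ⟨t, ht, rfl⟩ :=
      partitionsInto_subset_image_partitionsUpTo hk (Nat.cast_ne_zero.2 hn) hs
    refine ⟨t, ⟨ht, ?_⟩, rfl⟩
    rintro rfl
    exact hnP (by simpa using hs.2)
  calc (partitionsInto P n).ncard
      ≤ (partitionsUpTo P (n - k : ℤ) \ {0}).ncard :=
        (Set.ncard_le_ncard hsub (hfin.sdiff.image _)).trans (Set.ncard_image_le hfin.sdiff)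
    _ < (partitionsUpTo P (n - k)).ncard := Set.ncard_sdiff_singleton_lt_of_mem hempty hfin

lemma ncard_partitionsInto_pentagonal (hP : 0 ∉ P) (h1 : 1 ∈ P) (h2 : 2 ∈ P) (n : ℤ) :
    (partitionsInto P n).ncard + (partitionsInto P (n - 5)).ncard +
        (partitionsUpTo ((P \ {1}) \ {2}) (n - 3)).ncard =
      (partitionsInto P (n - 1)).ncard + (partitionsInto P (n - 2)).ncard +
        (partitionsInto ((P \ {1}) \ {2}) n).ncard := by
  have hP1 : 0 ∉ P \ {1} := fun h ↦ hP h.1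
  have h21 : 2 ∈ P \ {1} := ⟨h2, by simp⟩
  have split_one (j : ℤ) : (partitionsInto P (n - j)).ncard =
      (partitionsInto P (n - (j + 1))).ncard + (partitionsInto (P \ {1}) (n - j)).ncard := by
    simpa [sub_sub] using ncard_partitionsInto_of_mem hP h1 (n - j)
  have split_two : (partitionsInto (P \ {1}) n).ncard =
      (partitionsInto (P \ {1}) (n - 2)).ncard + (partitionsInto ((P \ {1}) \ {2}) n).ncard := by
    simpa using ncard_partitionsInto_of_mem hP1 h21 n
  have upTo : (partitionsUpTo ((P \ {1}) \ {2}) (n - 3)).ncard =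
      (partitionsInto (P \ {1}) (n - 3)).ncard + (partitionsInto (P \ {1}) (n - 4)).ncard := by
    simpa [Finset.sum_range_succ, sub_sub] using
      ncard_partitionsUpTo_sdiff_singleton hP1 h21 (n - 3)
  have at0 := split_one 0
  have at2 := split_one 2
  have at3 := split_one 3
  have at4 := split_one 4
  norm_num only [sub_zero] at at0 at2 at3 at4
  omega

end Partitions

theorem stmt14_general {P : Set ℕ} (hP : 0 ∉ P) (h1 : 1 ∈ P) (h2 : 2 ∈ P)
    {ρ : ℤ → ℤ} (hρ : ∀ m, -1 ≤ ρ m) (hρ_zero : 1 ≤ ρ 0) (hρ_mem : ∀ a ∈ P, 0 ≤ ρ a)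
    {n : ℤ} (hn : 0 ≤ n) :
    ((partitionsInto P n).ncard : ℤ) - (partitionsInto P (n - 1)).ncard
      - (partitionsInto P (n - 2)).ncard + (partitionsInto P (n - 5)).ncard - ρ n ≤ 0 := by
  lift n to ℕ using hn
  have hpent := ncard_partitionsInto_pentagonal hP h1 h2 n
  set Q : Set ℕ := (P \ {1}) \ {2}
  have h0Q : 0 ∉ Q := fun h ↦ hP h.1.1
  have hQ3 : ∀ b ∈ Q, 3 ≤ b := by
    rintro b ⟨⟨hb, hb1⟩, hb2⟩
    have hb0 : b ≠ 0 := fun h ↦ hP (h ▸ hb)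
    simp only [Set.mem_singleton_iff] at hb1 hb2
    omega
  suffices ((partitionsInto Q n).ncard : ℤ) ≤ (partitionsUpTo Q (n - 3)).ncard + ρ n by omega
  rcases eq_or_ne n 0 with rfl | hn0
  · rw [Nat.cast_zero, partitionsInto_zero h0Q, Set.ncard_singleton]
    omega
  by_cases hnP : n ∈ P
  · have hle := ncard_partitionsInto_le_ncard_partitionsUpTo h0Q hQ3 (Nat.cast_ne_zero.2 hn0)
    rw [Nat.cast_ofNat] at hle
    have := hρ_mem n hnP
    omega
  · have hn3 : 3 ≤ n := by
      have hn1 : n ≠ 1 := fun h ↦ hnP (h ▸ h1)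
      have hn2 : n ≠ 2 := fun h ↦ hnP (h ▸ h2)
      omega
    have hlt := ncard_partitionsInto_lt_ncard_partitionsUpTo h0Q hQ3 hn0 hn3 fun h ↦ hnP h.1.1
    rw [Nat.cast_ofNat] at hlt
    have := hρ n
    omega

lemma neg_one_le_of_eq_neg_one_pow_on_range {ι α : Type*} {g : ι → α} {e : ι → ℕ} {ρ : α → ℤ}
    (hρ_range : ∀ i, ρ (g i) = (-1) ^ e i) (hρ_zero : ∀ m, (∀ i, m ≠ g i) → ρ m = 0) (m : α) :
    -1 ≤ ρ m := by
  by_cases hm : ∀ i, m ≠ g i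
  · simp [hρ_zero m hm]
  · push Not at hm
    obtain ⟨i, rfl⟩ := hm
    rcases neg_one_pow_eq_or ℤ (e i) with h | h <;> simp [hρ_range, h]

/-- For every `n ≥ 0`, `b_3(n) − b_3(n−1) − b_3(n−2) + b_3(n−5) − ρ_3(n) ≤ 0`. -/
theorem stmt14
    (ρ : ℤ → ℤ)
    (hρ1 : ∀ i : ℤ, ρ (3 * (i * (3 * i - 1) / 2)) = (-1) ^ i.natAbs)
    (hρ2 : ∀ m : ℤ, (∀ i : ℤ, m ≠ 3 * (i * (3 * i - 1) / 2)) → ρ m = 0)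
    (n : ℤ) (hn : 0 ≤ n) :
    (b3 n : ℤ) - (b3 (n - 1) : ℤ) - (b3 (n - 2) : ℤ) + (b3 (n - 5) : ℤ) - ρ n ≤ 0 :=
  stmt14_general (P := {a | 0 < a ∧ ¬ 3 ∣ a}) (by simp) (by simp) (by simp)
    (neg_one_le_of_eq_neg_one_pow_on_range hρ1 hρ2) (by simpa using (hρ1 0).ge)
    (fun a ha ↦ (hρ2 a fun i hi ↦ ha.2 (by omega)).ge) hn
end

section
/- For every integer n ≥ 0, Q(n) − Q(n−1) − Q(n−3) + Q(n−6) + Q(n−10) − Q(n−15) − ρ_4(n) ≥ 0. -/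
/-- `Q m` is the number of partitions of `m` into distinct parts, with `Q m = 0`
for `m < 0`. A partition is a multiset of positive parts. -/
noncomputable def Q (m : ℤ) : ℕ :=
  Nat.card {s : Multiset ℕ // (s.sum : ℤ) = m ∧ s.Nodup ∧ ∀ a ∈ s, 0 < a}

/-!
Let `P k` be the generating function of the partitions into odd parts greater than `2 * k`, so that
`P 0` generates `Q` by Euler's theorem, and let `W k = P k / (1 - X ^ 2)`. Sorting partitions by
their smallest part `a` gives `P k = 1 + ∑ a, X ^ a * P ((a - 1) / 2)`, whence coefficientwise

* `P k ≤ 1 + X ^ (2 * k + 1) * W k`, and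
* `X ^ 4 * P k - P (k + 2) ≤ X ^ 4 - 1 + X ^ (4 * k + 6) * W k`, comparing a partition with
  smallest part `a` on the left with one with smallest part `a + 4` on the right.

The difference of the two sides for `k` minus that for `k + 1` is visibly nonnegative, and the
differences tend to `0` as `k` grows. On the other hand there is the identity
`(1 - X - X ^ 3 + X ^ 6 + X ^ 10 - X ^ 15) * P 0 =`
`P 5 - (X ^ 4 + X ^ 8) * P 3 + (X ^ 15 + X ^ 18) * W 3 + X ^ 20 * (1 - X ^ 3) * P 0`.
By the inequalities for `k = 3` it is at least `1 - X ^ 4 - X ^ 8 + X ^ 20 * (1 - X ^ 3) * P 0`.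
The last term counts partitions into odd parts other than `3`, one of which has all parts equal to
`1`, so it contributes at least `1` from degree `20` on. Meanwhile `ρ_4` is at most `1`, and its
only nonzero values below `20` are `1, -1, -1` at `0, 4, 8`.
-/

open PowerSeries Finset

section NonnegCoeff

/-- The power series with nonnegative coefficients: `g - f ∈ nonnegCoeff R` expresses the
coefficientwise inequality `f ≤ g`. -/
def nonnegCoeff (R : Type*) [CommSemiring R] [PartialOrder R] [IsOrderedRing R] :
    Subsemiring R⟦X⟧ where
  carrier := {f | ∀ n, 0 ≤ coeff n f}
  zero_mem' n := by simp
  one_mem' n := by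
    rw [coeff_one]
    split_ifs <;> simp
  add_mem' hf hg n := by
    rw [map_add]
    exact add_nonneg (hf n) (hg n)
  mul_mem' hf hg n := by
    rw [coeff_mul]
    exact sum_nonneg fun p _ => mul_nonneg (hf p.1) (hg p.2)

theorem X_pow_mem_nonnegCoeff (R : Type*) [CommSemiring R] [PartialOrder R] [IsOrderedRing R]
    (d : ℕ) : (X : R⟦X⟧) ^ d ∈ nonnegCoeff R := by
  intro n
  rw [coeff_X_pow]
  split_ifs <;> simp

theorem mem_nonnegCoeff_of_sub_succ_mem {R : Type*} [CommRing R] [PartialOrder R]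
    [IsOrderedRing R] {D : ℕ → R⟦X⟧} (hsub : ∀ k, D k - D (k + 1) ∈ nonnegCoeff R)
    (hdvd : ∀ k, X ^ k ∣ D k) (k : ℕ) : D k ∈ nonnegCoeff R := by
  intro n
  have hanti : Antitone fun k => coeff n (D k) := antitone_nat_of_succ_le fun k => by
    simpa only [map_sub, sub_nonneg] using hsub k n
  have hlarge : coeff n (D (k + (n + 1))) = 0 := X_pow_dvd_iff.1 (hdvd _) n (by omega)
  exact hlarge.symm.le.trans (hanti (Nat.le_add_right k (n + 1)))

end NonnegCoeff

section PartsSeries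

open Nat.Partition

variable {A B : Set ℕ}

open Classical in
/-- The generating function of the partitions whose parts all lie in `A`; whether `0 ∈ A` is
immaterial, as parts are positive. -/
noncomputable def partsSeries (A : Set ℕ) : ℤ⟦X⟧ :=
  PowerSeries.mk fun n => (#(restricted n (· ∈ A)) : ℤ)

theorem coeff_partsSeries (A : Set ℕ) [DecidablePred (· ∈ A)] (n : ℕ) :
    coeff n (partsSeries A) = #(restricted n (· ∈ A)) := by
  rw [partsSeries, coeff_mk]
  congr!

theorem card_filter_mem_parts_restricted [DecidablePred (· ∈ A)] {a : ℕ} (ha : 0 < a)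
    (haA : a ∈ A) (n : ℕ) :
    #{p ∈ restricted n (· ∈ A) | a ∈ p.parts} =
      if a ≤ n then #(restricted (n - a) (· ∈ A)) else 0 := by
  split_ifs with han
  · refine card_bij' (fun p hp => partitionWithPartEquiv ha han ⟨p, (mem_filter.1 hp).2⟩)
      (fun p _ => ((partitionWithPartEquiv ha han).symm p).1) ?_ ?_ ?_ ?_
    · intro p hp
      simp only [restricted, mem_filter, mem_univ, true_and,
        partitionWithPartEquiv_apply_parts] at hp ⊢
      exact fun i hi => hp.1 i (Multiset.mem_of_mem_erase hi)
    · intro p hp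
      simp only [restricted, mem_filter, mem_univ, true_and,
        partitionWithPartEquiv_symm_apply_parts, Multiset.mem_cons] at hp ⊢
      exact ⟨fun i hi => hi.elim (fun h => h ▸ haA) (hp i), Or.inl trivial⟩
    · intro p hp
      simp
    · intro p hp
      simp
  · rw [card_eq_zero, filter_eq_empty_iff]
    exact fun p _ hap => han (le_of_mem_parts hap)

theorem partsSeries_insert_eq_add {a : ℕ} (ha : 0 < a) (haA : a ∉ A) :
    partsSeries (insert a A) = partsSeries A + X ^ a * partsSeries (insert a A) := by
  classical
  ext n
  have hnot : {p ∈ restricted n (· ∈ insert a A) | a ∉ p.parts} = restricted n (· ∈ A) := by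
    ext p
    simp only [restricted, mem_filter, mem_univ, true_and, Set.mem_insert_iff]
    constructor
    · rintro ⟨hp, hap⟩ i hi
      exact (hp i hi).resolve_left fun h => hap (h ▸ hi)
    · exact fun hp => ⟨fun i hi => Or.inr (hp i hi), fun hap => haA (hp a hap)⟩
  have hsplit := card_filter_add_card_filter_not (s := restricted n (· ∈ insert a A))
    (fun p => a ∈ p.parts)
  rw [hnot, card_filter_mem_parts_restricted ha (Set.mem_insert a A)] at hsplit
  rw [map_add, coeff_X_pow_mul']
  simp only [coeff_partsSeries]
  rw [← hsplit, add_comm, Nat.cast_add, Nat.cast_ite, Nat.cast_zero]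

theorem partsSeries_sub_mem_nonnegCoeff (h : A ⊆ B) :
    partsSeries B - partsSeries A ∈ nonnegCoeff ℤ := by
  classical
  intro n
  rw [map_sub, coeff_partsSeries, coeff_partsSeries, sub_nonneg, Nat.cast_le]
  exact card_le_card (monotone_filter_right _ fun p _ hp i hi => h (hp i hi))

theorem one_le_coeff_partsSeries (h : 1 ∈ A) (n : ℕ) : 1 ≤ coeff n (partsSeries A) := by
  classical
  rw [coeff_partsSeries, Nat.one_le_cast, one_le_card]
  refine ⟨⟨Multiset.replicate n 1, fun hi => ?_, by simp⟩, mem_filter.2 ⟨mem_univ _, ?_⟩⟩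
  · exact (Multiset.eq_of_mem_replicate hi).symm ▸ one_pos
  · exact fun i hi => (Multiset.eq_of_mem_replicate hi).symm ▸ h

theorem X_pow_dvd_partsSeries_sub_one {m : ℕ} (h : ∀ a ∈ A, m ≤ a) :
    X ^ m ∣ partsSeries A - 1 := by
  classical
  rw [X_pow_dvd_iff]
  intro n hn
  rw [map_sub, coeff_partsSeries, coeff_one, sub_eq_zero]
  split_ifs with h0
  · subst h0
    rw [Nat.cast_eq_one, card_eq_one]
    exact ⟨default, by ext p; simp [restricted, Unique.eq_default p]⟩
  · rw [Nat.cast_eq_zero, card_eq_zero, restricted, filter_eq_empty_iff]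
    intro p _ hp
    obtain ⟨i, hi⟩ : ∃ i, i ∈ p.parts := Multiset.exists_mem_of_ne_zero fun hp0 =>
      h0 (by rw [← p.parts_sum, hp0, Multiset.sum_zero])
    exact (hn.trans_le (h i (hp i hi))).not_ge (le_of_mem_parts hi)

end PartsSeries

section OddParts

/-- The odd numbers `2 * k + 1, 2 * k + 3, …`. -/
def oddFrom (k : ℕ) : Set ℕ := {m | Odd m ∧ 2 * k < m}

theorem insert_oddFrom_succ (k : ℕ) : insert (2 * k + 1) (oddFrom (k + 1)) = oddFrom k := by
  ext m
  simp only [oddFrom, Set.mem_insert_iff, Set.mem_ofPred_eq, Odd]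
  constructor
  · rintro (rfl | ⟨hm, hlt⟩)
    · exact ⟨⟨k, rfl⟩, by omega⟩
    · exact ⟨hm, by omega⟩
  · rintro ⟨⟨j, rfl⟩, hlt⟩
    by_cases hj : j = k
    · exact Or.inl (by rw [hj])
    · exact Or.inr ⟨⟨j, rfl⟩, by omega⟩

theorem oddFrom_succ_subset (k : ℕ) : oddFrom (k + 1) ⊆ oddFrom k := by
  rw [← insert_oddFrom_succ k]
  exact Set.subset_insert _ _

/-- The generating function of the partitions into odd parts greater than `2 * k`, written `P k`
in the outline above. -/
noncomputable def oddSeries (k : ℕ) : ℤ⟦X⟧ := partsSeries (oddFrom k)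

/-- The generating function of the partitions whose odd parts are greater than `2 * k` and whose
even parts all equal `2`, written `W k` in the outline above. It packages the partial sums, over one
residue class modulo `2`, of the coefficients of `oddSeries k`. -/
noncomputable def oddTwoSeries (k : ℕ) : ℤ⟦X⟧ := partsSeries (insert 2 (oddFrom k))

theorem oddSeries_eq_succ_add (k : ℕ) :
    oddSeries k = oddSeries (k + 1) + X ^ (2 * k + 1) * oddSeries k := by
  have h := partsSeries_insert_eq_add (A := oddFrom (k + 1)) (Nat.succ_pos (2 * k))
    fun h => absurd h.2 (by omega)
  rwa [insert_oddFrom_succ] at h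

theorem oddTwoSeries_eq_oddSeries_add (k : ℕ) :
    oddTwoSeries k = oddSeries k + X ^ 2 * oddTwoSeries k :=
  partsSeries_insert_eq_add two_pos fun h => absurd h.1 (by decide)

theorem oddSeries_sub_succ_mem_nonnegCoeff (k : ℕ) :
    oddSeries k - oddSeries (k + 1) ∈ nonnegCoeff ℤ :=
  partsSeries_sub_mem_nonnegCoeff (oddFrom_succ_subset k)

theorem oddTwoSeries_sub_succ_mem_nonnegCoeff (k : ℕ) :
    oddTwoSeries k - oddTwoSeries (k + 1) ∈ nonnegCoeff ℤ :=
  partsSeries_sub_mem_nonnegCoeff (Set.insert_subset_insert (oddFrom_succ_subset k))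

theorem X_pow_dvd_oddSeries_sub_one {k m : ℕ} (h : m ≤ 2 * k + 1) : X ^ m ∣ oddSeries k - 1 :=
  X_pow_dvd_partsSeries_sub_one fun _ ha => h.trans ha.2

theorem one_add_sub_oddSeries_mem_nonnegCoeff (k : ℕ) :
    1 + X ^ (2 * k + 1) * oddTwoSeries k - oddSeries k ∈ nonnegCoeff ℤ := by
  refine mem_nonnegCoeff_of_sub_succ_mem
    (D := fun k => 1 + X ^ (2 * k + 1) * oddTwoSeries k - oddSeries k)
    (fun k => ?_) (fun k => ?_) k
  · have hdiff : 1 + X ^ (2 * k + 1) * oddTwoSeries k - oddSeries k -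
        (1 + X ^ (2 * (k + 1) + 1) * oddTwoSeries (k + 1) - oddSeries (k + 1)) =
        X ^ (2 * k + 3) * (oddTwoSeries k - oddTwoSeries (k + 1)) := by
      linear_combination X ^ (2 * k + 1) * oddTwoSeries_eq_oddSeries_add k - oddSeries_eq_succ_add k
    rw [hdiff]
    exact mul_mem (X_pow_mem_nonnegCoeff ℤ _) (oddTwoSeries_sub_succ_mem_nonnegCoeff k)
  · have hW : (X : ℤ⟦X⟧) ^ k ∣ X ^ (2 * k + 1) * oddTwoSeries k :=
      (pow_dvd_pow X (by omega)).mul_right _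
    have hP : X ^ k ∣ oddSeries k - 1 := X_pow_dvd_oddSeries_sub_one (by omega)
    convert dvd_sub hW hP using 1
    ring

theorem oddSeries_add_two_sub_mem_nonnegCoeff (k : ℕ) :
    oddSeries (k + 2) - 1 - X ^ 4 * (oddSeries k - 1) + X ^ (4 * k + 6) * oddTwoSeries k ∈
      nonnegCoeff ℤ := by
  refine mem_nonnegCoeff_of_sub_succ_mem
    (D := fun k => oddSeries (k + 2) - 1 - X ^ 4 * (oddSeries k - 1) +
      X ^ (4 * k + 6) * oddTwoSeries k)
    (fun k => ?_) (fun k => ?_) k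
  · have hdiff : oddSeries (k + 2) - 1 - X ^ 4 * (oddSeries k - 1) +
          X ^ (4 * k + 6) * oddTwoSeries k -
        (oddSeries (k + 1 + 2) - 1 - X ^ 4 * (oddSeries (k + 1) - 1) +
          X ^ (4 * (k + 1) + 6) * oddTwoSeries (k + 1)) =
        X ^ (4 * k + 10) * (oddTwoSeries k - oddTwoSeries (k + 1)) +
          X ^ (4 * k + 8) * (oddSeries k - oddSeries (k + 1)) := by
      linear_combination oddSeries_eq_succ_add (k + 2) - X ^ 4 * oddSeries_eq_succ_add k -
        X ^ (2 * k + 5) * (oddSeries_eq_succ_add k + oddSeries_eq_succ_add (k + 1)) +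
        X ^ (4 * k + 6) * (1 + X ^ 2) * oddTwoSeries_eq_oddSeries_add k
    rw [hdiff]
    exact add_mem
      (mul_mem (X_pow_mem_nonnegCoeff ℤ _) (oddTwoSeries_sub_succ_mem_nonnegCoeff k))
      (mul_mem (X_pow_mem_nonnegCoeff ℤ _) (oddSeries_sub_succ_mem_nonnegCoeff k))
  · exact dvd_add (dvd_sub (X_pow_dvd_oddSeries_sub_one (by omega))
      ((X_pow_dvd_oddSeries_sub_one (by omega)).mul_left _))
      ((pow_dvd_pow X (by omega)).mul_right _)

end OddParts

section Truncated

/-- The Gauss theta series `∑ j, (-X) ^ (j * (j + 1) / 2)`, truncated after six terms, times the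
generating function of `Q`. -/
noncomputable def truncatedSeries : ℤ⟦X⟧ :=
  (1 - X - X ^ 3 + X ^ 6 + X ^ 10 - X ^ 15) * oddSeries 0

theorem truncatedSeries_eq :
    truncatedSeries = 1 - X ^ 4 - X ^ 8 + X ^ 20 * partsSeries (insert 1 (oddFrom 2)) +
      (oddSeries 5 - 1 - X ^ 4 * (oddSeries 3 - 1) + X ^ 18 * oddTwoSeries 3) +
      X ^ 8 * (1 + X ^ 7 * oddTwoSeries 3 - oddSeries 3) := by
  have hP3 : oddSeries 3 = (1 - X) * (1 - X ^ 3) * (1 - X ^ 5) * oddSeries 0 := by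
    linear_combination -(1 - X ^ 5) * ((1 - X ^ 3) * oddSeries_eq_succ_add 0 +
      oddSeries_eq_succ_add 1) - oddSeries_eq_succ_add 2
  have hP5 : oddSeries 5 = (1 - X ^ 7) * (1 - X ^ 9) * oddSeries 3 := by
    linear_combination -(1 - X ^ 9) * oddSeries_eq_succ_add 3 - oddSeries_eq_succ_add 4
  have hV : (1 - X) * partsSeries (insert 1 (oddFrom 2)) =
      (1 - X) * (1 - X ^ 3) * oddSeries 0 := by
    have h := partsSeries_insert_eq_add (A := oddFrom 2) one_pos fun h => absurd h.2 (by decide)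
    rw [← oddSeries] at h
    linear_combination h - (1 - X ^ 3) * oddSeries_eq_succ_add 0 - oddSeries_eq_succ_add 1
  have hX : (1 - X : ℤ⟦X⟧) ≠ 0 := fun h => by simpa using congrArg (coeff 0) h
  -- This clears denominators, as `1 - X ^ 2` divides `(1 - X) * (X ^ 15 + X ^ 18)`.
  refine mul_left_cancel₀ hX ?_
  rw [truncatedSeries, hP5]
  linear_combination -X ^ 20 * hV - X ^ 15 * (1 - X + X ^ 2) * oddTwoSeries_eq_oddSeries_add 3 +
    ((1 - X) * (X ^ 4 + X ^ 8) - (1 - X) * (1 - X ^ 7) * (1 - X ^ 9) -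
      X ^ 15 * (1 - X + X ^ 2)) * hP3

/-- A common bound: above `ρ_4`, with equality below `20`, and below `truncatedSeries`. -/
def rhoBound (n : ℕ) : ℤ :=
  if n = 0 then 1 else if n = 4 ∨ n = 8 then -1 else if n < 20 then 0 else 1

theorem rhoBound_le_coeff_truncatedSeries (n : ℕ) : rhoBound n ≤ coeff n truncatedSeries := by
  have hP := oddSeries_add_two_sub_mem_nonnegCoeff 3 n
  have hW := mul_mem (X_pow_mem_nonnegCoeff ℤ 8) (one_add_sub_oddSeries_mem_nonnegCoeff 3) n
  suffices h : rhoBound n ≤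
      coeff n (1 - X ^ 4 - X ^ 8 + X ^ 20 * partsSeries (insert 1 (oddFrom 2))) by
    rw [truncatedSeries_eq, map_add, map_add]
    exact le_add_of_le_of_nonneg (le_add_of_le_of_nonneg h hP) hW
  have hV := one_le_coeff_partsSeries (Set.mem_insert 1 (oddFrom 2)) (n - 20)
  simp only [map_add, map_sub, coeff_one, coeff_X_pow, coeff_X_pow_mul', rhoBound]
  split_ifs <;> omega

theorem le_rhoBound {ρ : ℤ → ℤ}
    (hρ1 : ∀ i : ℤ, ρ (4 * (i * (3 * i - 1) / 2)) = (-1) ^ i.natAbs)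
    (hρ2 : ∀ m : ℤ, (∀ i : ℤ, m ≠ 4 * (i * (3 * i - 1) / 2)) → ρ m = 0) (n : ℕ) :
    ρ n ≤ rhoBound n := by
  by_cases h : ∃ i : ℤ, (n : ℤ) = 4 * (i * (3 * i - 1) / 2)
  · obtain ⟨i, hi⟩ := h
    rw [hi, hρ1]
    by_cases hn : n < 20
    · have hlt : i * (3 * i - 1) < 10 := by omega
      have hi_lower : -2 < i := by nlinarith
      have hi_upper : i < 3 := by nlinarith
      interval_cases i <;> norm_num at hi <;> norm_num [rhoBound] <;> omega
    · rw [rhoBound, if_neg (by omega), if_neg (by omega), if_neg hn]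
      rcases neg_one_pow_eq_or ℤ i.natAbs with hsign | hsign <;> simp [hsign]
  · push Not at h
    rw [hρ2 n h, rhoBound]
    have h4 : n ≠ 4 := fun hn => h 1 (by subst hn; norm_num)
    have h8 : n ≠ 8 := fun hn => h (-1) (by subst hn; norm_num)
    split_ifs <;> omega

end Truncated

section DistinctParts

theorem Q_of_neg {m : ℤ} (hm : m < 0) : Q m = 0 := by
  rw [Q, Nat.card_eq_zero]
  exact Or.inl ⟨fun s => by have := s.2.1; omega⟩

theorem Q_natCast (n : ℕ) : Q n = #(Nat.Partition.distincts n) := by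
  rw [Q, ← Nat.card_eq_finsetCard]
  exact Nat.card_congr
    { toFun s := ⟨⟨s.1, fun hi => s.2.2.2 _ hi, Nat.cast_injective s.2.1⟩,
        mem_filter.2 ⟨mem_univ _, s.2.2.1⟩⟩
      invFun p := ⟨p.1.parts, congrArg Nat.cast p.1.parts_sum, (mem_filter.1 p.2).2,
        fun _ hi => p.1.parts_pos hi⟩
      left_inv _ := rfl
      right_inv _ := rfl }

theorem coeff_oddSeries_zero (n : ℕ) : coeff n (oddSeries 0) = Q n := by
  classical
  rw [Q_natCast, ← Nat.Partition.card_odds_eq_card_distincts, oddSeries, coeff_partsSeries,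
    Nat.cast_inj, Nat.Partition.odds]
  congr 1
  refine filter_congr fun p _ => forall₂_congr fun i hi => ?_
  simp [oddFrom, p.parts_pos hi]

theorem coeff_X_pow_mul_oddSeries_zero (d n : ℕ) :
    coeff n (X ^ d * oddSeries 0) = (Q ((n : ℤ) - d) : ℤ) := by
  rw [coeff_X_pow_mul']
  split_ifs with hd
  · rw [coeff_oddSeries_zero, Nat.cast_sub hd]
  · rw [Q_of_neg (by omega), Nat.cast_zero]

theorem coeff_truncatedSeries (n : ℕ) :
    coeff n truncatedSeries = (Q n : ℤ) - (Q ((n : ℤ) - 1) : ℤ) - (Q ((n : ℤ) - 3) : ℤ)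
      + (Q ((n : ℤ) - 6) : ℤ) + (Q ((n : ℤ) - 10) : ℤ) - (Q ((n : ℤ) - 15) : ℤ) := by
  have hexpand : truncatedSeries = oddSeries 0 - X ^ 1 * oddSeries 0 - X ^ 3 * oddSeries 0
      + X ^ 6 * oddSeries 0 + X ^ 10 * oddSeries 0 - X ^ 15 * oddSeries 0 := by
    rw [truncatedSeries]
    ring
  simp only [hexpand, map_add, map_sub, coeff_oddSeries_zero, coeff_X_pow_mul_oddSeries_zero,
    Nat.cast_one, Nat.cast_ofNat]

end DistinctParts

/-- For every `n ≥ 0`,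
`Q(n) − Q(n−1) − Q(n−3) + Q(n−6) + Q(n−10) − Q(n−15) − ρ_4(n) ≥ 0`. -/
theorem stmt18
    (ρ : ℤ → ℤ)
    (hρ1 : ∀ i : ℤ, ρ (4 * (i * (3 * i - 1) / 2)) = (-1) ^ i.natAbs)
    (hρ2 : ∀ m : ℤ, (∀ i : ℤ, m ≠ 4 * (i * (3 * i - 1) / 2)) → ρ m = 0)
    (n : ℤ) (hn : 0 ≤ n) :
    0 ≤ (Q n : ℤ) - (Q (n - 1) : ℤ) - (Q (n - 3) : ℤ) + (Q (n - 6) : ℤ)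
        + (Q (n - 10) : ℤ) - (Q (n - 15) : ℤ) - ρ n := by
  lift n to ℕ using hn
  rw [sub_nonneg, ← coeff_truncatedSeries]
  exact (le_rhoBound hρ1 hρ2 n).trans (rhoBound_le_coeff_truncatedSeries n)
end
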